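/- Let n ≥ 2 and let G = S_n(a_1, a_2, …, a_n) be a palm (a_i ≥ 1 for all i). Then ⌈log_3(n/4)⌉ + 3 ≤ χ_L(G) ≤ n + 1. -/

import Mathlib

open SimpleGraph

/-- Distance from a vertex to a set of vertices, `d(u,S) = min {d(u,v) : v ∈ S}`. -/
noncomputable def distToSet {V : Type*} (G : SimpleGraph V) (u : V) (S : Set V) : ℕ :=
  sInf (G.dist u '' S)

/-- `c` is a locating coloring of `G` with `k` colors: a proper coloring such that any two
distinct vertices are resolved by some color class. -/
def IsLocatingColoring {V : Type*} (G : SimpleGraph V) {k : ℕ} (c : V → Fin k) : Prop :=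
  (∀ u v : V, G.Adj u v → c u ≠ c v) ∧
  ∀ u v : V, u ≠ v →
    ∃ i : Fin k, distToSet G u (c ⁻¹' {i}) ≠ distToSet G v (c ⁻¹' {i})

/-- The locating chromatic number `χ_L(G)`: the least `k` admitting a locating `k`-coloring. -/
noncomputable def locatingChromaticNumber {V : Type*} (G : SimpleGraph V) : ℕ :=
  sInf {k : ℕ | ∃ c : V → Fin k, IsLocatingColoring G c}

/-- The vertex set of the palm `S_n(a_1, …, a_n)`: a hub `none` and, for each leg
`i : Fin n` (representing leg `i+1`), vertices `j : Fin (a (i+1))`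
(vertex `some ⟨i, j⟩` represents `a_{i+1, j+1}`). -/
def PalmVert (n : ℕ) (a : ℕ → ℕ) : Type :=
  Option ((i : Fin n) × Fin (a ((i : ℕ) + 1)))

/-- The palm `S_n(a_1, …, a_n)`: the star `K_{1,n}` whose `i`-th edge has been subdivided
`a_i - 1` times; the hub is joined to the first vertex of each leg, and consecutive
vertices along a leg are adjacent. -/
def Palm (n : ℕ) (a : ℕ → ℕ) : SimpleGraph (PalmVert n a) :=
  SimpleGraph.fromRel fun u v =>
    match u, v with
    | none, some ⟨_, j⟩ => (j : ℕ) = 0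
    | some ⟨i, j⟩, some ⟨i', j'⟩ => (i : ℕ) = (i' : ℕ) ∧ (j' : ℕ) = (j : ℕ) + 1
    | _, _ => False

section DistToSet

variable {V : Type*} {G : SimpleGraph V} {u v x y : V} {S : Set V}

lemma distToSet_le_dist (hv : v ∈ S) : distToSet G u S ≤ G.dist u v :=
  Nat.sInf_le ⟨v, hv, rfl⟩

lemma exists_dist_eq_distToSet (G : SimpleGraph V) (u : V) (hS : S.Nonempty) :
    ∃ v ∈ S, G.dist u v = distToSet G u S :=
  Nat.sInf_mem (hS.image (G.dist u))

lemma distToSet_eq_zero_of_mem (hu : u ∈ S) : distToSet G u S = 0 := by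
  simpa using distToSet_le_dist (G := G) (u := u) hu

lemma distToSet_pos (hG : G.Connected) (hS : S.Nonempty) (hu : u ∉ S) :
    0 < distToSet G u S := by
  obtain ⟨v, hv, h⟩ := exists_dist_eq_distToSet G u hS
  rw [← h]
  exact hG.pos_dist_of_ne fun e => hu (e ▸ hv)

lemma distToSet_le_add_one_of_adj (hG : G.Connected) (h : G.Adj x y) :
    distToSet G x S ≤ distToSet G y S + 1 := by
  rcases S.eq_empty_or_nonempty with rfl | hS
  · simp [distToSet]
  obtain ⟨v, hv, hd⟩ := exists_dist_eq_distToSet G y hS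
  have h₁ := distToSet_le_dist (G := G) (u := x) hv
  have h₂ : G.dist x v ≤ G.dist x y + G.dist y v := hG.dist_triangle
  have h₃ : G.dist x y = 1 := dist_eq_one_iff_adj.2 h
  omega

end DistToSet

section LowerBound

variable {V ι : Type*} [Fintype ι] {G : SimpleGraph V} {k : ℕ} {c : V → Fin k}

/-- If `t` colors occur among the given neighbors of `x`, then each of these colors occurs at most
`2 ^ (t - 1) * 3 ^ (k - t - 1)` times among them. -/
lemma IsLocatingColoring.card_neighbors_of_color_le (hG : G.Connected)
    (hc : IsLocatingColoring G c) {x : V} {f : ι → V} (hf : Function.Injective f)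
    (hadj : ∀ b, G.Adj x (f b)) {T : Finset (Fin k)} (hT : T = Finset.univ.image (c ∘ f))
    {i : Fin k} (hi : i ∈ T) :
    (Finset.univ.filter fun b => c (f b) = i).card ≤
      2 ^ (T.card - 1) * 3 ^ (k - T.card - 1) := by
  classical
  set D : Fin k → ℕ := fun j => distToSet G x (c ⁻¹' {j}) with hD
  set F : Fin k → Finset ℕ := fun j =>
    if j = i then {0} else if j = c x then {1} else
      if j ∈ T then Finset.Icc 1 2 else Finset.Icc (D j - 1) (D j + 1) with hF
  have hxT : c x ∉ T := by
    simp only [hT, Finset.mem_image, Finset.mem_univ, true_and, Function.comp_apply, not_exists]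
    exact fun b hb => hc.1 _ _ (hadj b) hb.symm
  have hix : i ≠ c x := fun h => hxT (h ▸ hi)
  have hmaps : ∀ b ∈ Finset.univ.filter (fun b => c (f b) = i),
      (fun j => distToSet G (f b) (c ⁻¹' {j})) ∈ Fintype.piFinset F := by
    intro b hb
    rw [Finset.mem_filter] at hb
    rw [Fintype.mem_piFinset]
    intro j
    simp only [hF]
    have hbx : G.dist (f b) x = 1 := dist_eq_one_iff_adj.2 (hadj b).symm
    split_ifs with h₁ h₂ h₃
    · rw [Finset.mem_singleton]
      exact distToSet_eq_zero_of_mem (by simp [h₁, hb.2])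
    · have hx : x ∈ c ⁻¹' {j} := by simp [h₂]
      have hle := distToSet_le_dist (G := G) (u := f b) hx
      have hpos := distToSet_pos (u := f b) hG ⟨x, hx⟩ (by simp [hb.2, Ne.symm h₁])
      rw [Finset.mem_singleton]
      omega
    · rw [hT, Finset.mem_image] at h₃
      obtain ⟨b', -, hb'⟩ := h₃
      have hx : f b' ∈ c ⁻¹' {j} := by simpa using hb'
      have hle := distToSet_le_dist (G := G) (u := f b) hx
      have hpos := distToSet_pos (u := f b) hG ⟨_, hx⟩ (by simp [hb.2, Ne.symm h₁])
      have htri : G.dist (f b) (f b') ≤ G.dist (f b) x + G.dist x (f b') := hG.dist_triangle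
      have hxb : G.dist x (f b') = 1 := dist_eq_one_iff_adj.2 (hadj b')
      rw [Finset.mem_Icc]
      omega
    · have hle := distToSet_le_add_one_of_adj (S := c ⁻¹' {j}) hG (hadj b)
      have hge := distToSet_le_add_one_of_adj (S := c ⁻¹' {j}) hG (hadj b).symm
      rw [Finset.mem_Icc]
      simp only [hD]
      omega
  have hinj : Set.InjOn (fun b j => distToSet G (f b) (c ⁻¹' {j}))
      (Finset.univ.filter fun b => c (f b) = i : Finset ι) := by
    intro b _ b' _ h
    by_contra hne
    obtain ⟨j, hj⟩ := hc.2 _ _ (hf.ne hne)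
    exact hj (congrFun h j)
  refine (Finset.card_le_card_of_injOn _ hmaps hinj).trans ?_
  rw [Fintype.card_piFinset, ← Finset.prod_mul_prod_compl T]
  refine Nat.mul_le_mul ?_ ?_
  · rw [← Finset.mul_prod_erase T _ hi, ← Finset.card_erase_of_mem hi]
    have h : (F i).card = 1 := by simp [hF]
    rw [h, one_mul]
    refine Finset.prod_le_pow_card _ _ _ fun j hj => ?_
    rw [Finset.mem_erase] at hj
    have hjx : j ≠ c x := fun h => hxT (h ▸ hj.2)
    simp [hF, hj.1, hj.2, hjx]
  · have hx : c x ∈ Tᶜ := by simpa using hxT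
    have hcard : (Tᶜ.erase (c x)).card = k - T.card - 1 := by
      rw [Finset.card_erase_of_mem hx, Finset.card_compl, Fintype.card_fin]
    rw [← Finset.mul_prod_erase _ _ hx, ← hcard]
    have h : (F (c x)).card = 1 := by simp [hF, hix.symm]
    rw [h, one_mul]
    refine Finset.prod_le_pow_card _ _ _ fun j hj => ?_
    rw [Finset.mem_erase, Finset.mem_compl] at hj
    have hji : j ≠ i := fun h => hj.2 (h ▸ hi)
    simp only [hF, hj.1, hj.2, hji, if_false, Nat.card_Icc]
    omega

lemma nine_mul_mul_two_pow_le (t : ℕ) : 9 * ((t + 1) * 2 ^ t) ≤ 4 * 3 ^ (t + 1) := by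
  induction t with
  | zero => norm_num
  | succ t ih =>
    rcases Nat.lt_or_ge t 1 with h | h
    · obtain rfl : t = 0 := by omega
      norm_num
    · have h₂ : 2 * (t + 2) ≤ 3 * (t + 1) := by omega
      calc 9 * ((t + 1 + 1) * 2 ^ (t + 1)) = 9 * (2 * (t + 2) * 2 ^ t) := by ring
        _ ≤ 9 * (3 * (t + 1) * 2 ^ t) := by gcongr
        _ = 3 * (9 * ((t + 1) * 2 ^ t)) := by ring
        _ ≤ 3 * (4 * 3 ^ (t + 1)) := by gcongr
        _ = 4 * 3 ^ (t + 1 + 1) := by ring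

/-- A vertex of a connected graph with a locating `k`-coloring has at most `4 * 3 ^ (k - 3)`
neighbors. -/
theorem IsLocatingColoring.card_neighbors_le (hG : G.Connected) (hc : IsLocatingColoring G c)
    {x : V} {f : ι → V} (hf : Function.Injective f) (hadj : ∀ b, G.Adj x (f b)) :
    27 * Fintype.card ι ≤ 4 * 3 ^ k := by
  classical
  obtain ⟨T, hT⟩ : ∃ T, T = Finset.univ.image (c ∘ f) := ⟨_, rfl⟩
  have hle : Fintype.card ι ≤ 2 ^ (T.card - 1) * 3 ^ (k - T.card - 1) * T.card := by
    rw [← Finset.card_univ, hT]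
    refine Finset.card_le_mul_card_image _ _ fun i hi => ?_
    rw [← hT] at hi ⊢
    exact hc.card_neighbors_of_color_le hG hf hadj hT hi
  have hxT : c x ∉ T := by
    simp only [hT, Finset.mem_image, Finset.mem_univ, true_and, Function.comp_apply, not_exists]
    exact fun b hb => hc.1 _ _ (hadj b) hb.symm
  have hlt : T.card < k := by
    simpa using Finset.card_lt_univ_of_notMem hxT
  obtain ht | ⟨t, ht⟩ : T.card = 0 ∨ ∃ t, T.card = t + 1 := by
    cases T.card <;> simp
  · rw [ht, mul_zero] at hle
    omega
  · obtain ⟨m, rfl⟩ : ∃ m, k = t + 1 + 1 + m := ⟨k - (t + 1 + 1), by omega⟩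
    rw [ht, show t + 1 + 1 + m - (t + 1) - 1 = m by omega, Nat.add_sub_cancel] at hle
    calc 27 * Fintype.card ι ≤ 27 * (2 ^ t * 3 ^ m * (t + 1)) := by gcongr
      _ = 9 * ((t + 1) * 2 ^ t) * (3 * 3 ^ m) := by ring
      _ ≤ 4 * 3 ^ (t + 1) * (3 * 3 ^ m) := by exact Nat.mul_le_mul_right _ (nine_mul_mul_two_pow_le t)
      _ = 4 * 3 ^ (t + 1 + 1 + m) := by ring

end LowerBound

namespace Palm

variable {n : ℕ} {a : ℕ → ℕ}

/-- The hub of the palm. -/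
def hub : PalmVert n a := none

/-- The vertex of leg `i` at distance `j + 1` from the hub. -/
def leg (i : Fin n) (j : Fin (a (i + 1))) : PalmVert n a := some ⟨i, j⟩

lemma eq_hub_or_eq_leg : ∀ v : PalmVert n a, v = hub ∨ ∃ i j, v = leg i j
  | none => Or.inl rfl
  | some ⟨i, j⟩ => Or.inr ⟨i, j, rfl⟩

lemma hub_ne_leg (i : Fin n) (j : Fin (a (i + 1))) : (hub : PalmVert n a) ≠ leg i j :=
  Option.some_ne_none _ |>.symm

lemma leg_injective (i : Fin n) : Function.Injective (leg (a := a) i) := by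
  intro j j' h
  simpa using Option.some.inj h

lemma leg_ne_leg {i i' : Fin n} (h : i ≠ i') (j : Fin (a (i + 1))) (j' : Fin (a (i' + 1))) :
    leg i j ≠ leg i' j' := by
  intro e
  exact h (congrArg Sigma.fst (Option.some.inj e))

lemma adj_hub_leg {i : Fin n} {j : Fin (a (i + 1))} :
    (Palm n a).Adj hub (leg i j) ↔ (j : ℕ) = 0 := by
  have := hub_ne_leg i j
  simp only [Palm, SimpleGraph.fromRel_adj, ne_eq, this, not_false_eq_true, true_and]
  simp [hub, leg]

lemma adj_leg_leg {i i' : Fin n} {j : Fin (a (i + 1))} {j' : Fin (a (i' + 1))} :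
    (Palm n a).Adj (leg i j) (leg i' j') ↔
      i = i' ∧ ((j' : ℕ) = j + 1 ∨ (j : ℕ) = j' + 1) := by
  simp only [Palm, SimpleGraph.fromRel_adj]
  constructor
  · rintro ⟨-, h | h⟩
    · exact ⟨Fin.ext h.1, Or.inl h.2⟩
    · exact ⟨Fin.ext h.1.symm, Or.inr h.2⟩
  · rintro ⟨rfl, h⟩
    refine ⟨fun e => ?_, h.imp (⟨rfl, ·⟩) (⟨rfl, ·⟩)⟩
    rw [leg_injective i e] at h
    omega

/-- The distance to the hub. -/
def depth : PalmVert n a → ℕ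
  | none => 0
  | some ⟨_, j⟩ => j + 1

@[simp] lemma depth_hub : depth (hub : PalmVert n a) = 0 := rfl

@[simp] lemma depth_leg (i : Fin n) (j : Fin (a (i + 1))) : depth (leg i j) = j + 1 := rfl

lemma exists_walk_hub (v : PalmVert n a) :
    ∃ w : (Palm n a).Walk v hub, w.length = depth v := by
  obtain rfl | ⟨i, ⟨j, hj⟩, rfl⟩ := eq_hub_or_eq_leg v
  · exact ⟨.nil, rfl⟩
  induction j with
  | zero => exact ⟨.cons (adj_hub_leg.2 rfl).symm .nil, rfl⟩
  | succ j ih =>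
    obtain ⟨w, hw⟩ := ih (by omega)
    exact ⟨.cons (adj_leg_leg.2 ⟨rfl, Or.inr rfl⟩) w, by simp [hw]⟩

lemma connected : (Palm n a).Connected where
  preconnected u v := by
    obtain ⟨w, -⟩ := exists_walk_hub u
    obtain ⟨w', -⟩ := exists_walk_hub v
    exact ⟨w.append w'.reverse⟩
  nonempty := ⟨hub⟩

/-- The depth, with the vertices of leg `l` counted negatively. -/
def signedDepth (l : Fin n) : PalmVert n a → ℤ
  | none => 0
  | some ⟨i, j⟩ => if i = l then -(j + 1) else j + 1

@[simp] lemma signedDepth_hub (l : Fin n) : signedDepth l (hub : PalmVert n a) = 0 := rfl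

lemma signedDepth_leg (l i : Fin n) (j : Fin (a (i + 1))) :
    signedDepth l (leg i j) = if i = l then -((j : ℤ) + 1) else (j : ℤ) + 1 := rfl

lemma signedDepth_le_of_adj (l : Fin n) {u v : PalmVert n a} (h : (Palm n a).Adj u v) :
    signedDepth l u ≤ signedDepth l v + 1 := by
  obtain rfl | ⟨i, j, rfl⟩ := eq_hub_or_eq_leg u <;>
    obtain rfl | ⟨i', j', rfl⟩ := eq_hub_or_eq_leg v
  · exact (h.ne rfl).elim
  · rw [adj_hub_leg] at h
    simp only [signedDepth_hub, signedDepth_leg]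
    split_ifs <;> omega
  · rw [adj_comm, adj_hub_leg] at h
    simp only [signedDepth_hub, signedDepth_leg]
    split_ifs <;> omega
  · obtain ⟨rfl, h⟩ := adj_leg_leg.1 h
    simp only [signedDepth_leg]
    split_ifs <;> omega

lemma signedDepth_le_add_length (l : Fin n) {u v : PalmVert n a} (w : (Palm n a).Walk u v) :
    signedDepth l u ≤ signedDepth l v + w.length := by
  induction w with
  | nil => simp
  | cons h w ih =>
    have := signedDepth_le_of_adj l h
    rw [Walk.length_cons]
    push_cast
    omega

lemma signedDepth_le_add_dist (l : Fin n) (u v : PalmVert n a) :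
    signedDepth l u ≤ signedDepth l v + (Palm n a).dist u v := by
  obtain ⟨w, hw⟩ := connected.exists_walk_length_eq_dist u v
  rw [← hw]
  exact signedDepth_le_add_length l w

/-- The coloring in which leg `i` is colored alternately with its own color and the color of the
hub. -/
def coloring : PalmVert n a → Fin (n + 1)
  | none => Fin.last n
  | some ⟨i, j⟩ => if (j : ℕ) % 2 = 0 then i.castSucc else Fin.last n

lemma coloring_hub : coloring (hub : PalmVert n a) = Fin.last n := rfl

lemma coloring_leg (i : Fin n) (j : Fin (a (i + 1))) :
    coloring (leg i j) = if (j : ℕ) % 2 = 0 then i.castSucc else Fin.last n := rfl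

lemma coloring_proper {u v : PalmVert n a} (h : (Palm n a).Adj u v) :
    coloring u ≠ coloring v := by
  obtain rfl | ⟨i, j, rfl⟩ := eq_hub_or_eq_leg u <;>
    obtain rfl | ⟨i', j', rfl⟩ := eq_hub_or_eq_leg v
  · exact (h.ne rfl).elim
  · rw [adj_hub_leg] at h
    simpa [coloring_hub, coloring_leg, h] using (Fin.castSucc_ne_last i').symm
  · rw [adj_comm, adj_hub_leg] at h
    simp [coloring_hub, coloring_leg, h]
  · obtain ⟨rfl, h⟩ := adj_leg_leg.1 h
    simp only [coloring_leg]
    split_ifs with h₁ h₂ h₂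
    · omega
    · exact Fin.castSucc_ne_last i
    · exact (Fin.castSucc_ne_last i).symm
    · omega

lemma signedDepth_le_neg_one_of_coloring {l : Fin n} {v : PalmVert n a}
    (h : coloring v = l.castSucc) : signedDepth l v ≤ -1 := by
  obtain rfl | ⟨i, j, rfl⟩ := eq_hub_or_eq_leg v
  · exact (Fin.castSucc_ne_last l h.symm).elim
  rw [coloring_leg] at h
  split_ifs at h with h₁
  · rw [signedDepth_leg, if_pos (Fin.castSucc_injective _ h)]
    omega
  · exact (Fin.castSucc_ne_last l h.symm).elim

lemma distToSet_coloring_le_one {i : Fin n} (j : Fin (a (i + 1))) :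
    distToSet (Palm n a) (leg i j) (coloring ⁻¹' {i.castSucc}) ≤ 1 := by
  rcases Nat.mod_two_eq_zero_or_one j with h | h
  · rw [distToSet_eq_zero_of_mem (by simp [coloring_leg, h])]
    exact zero_le_one
  · have hj := j.isLt
    refine (distToSet_le_dist (v := leg i ⟨j - 1, by omega⟩) ?_).trans (le_of_eq ?_)
    · simp only [Set.mem_preimage, coloring_leg, Set.mem_singleton_iff]
      exact if_pos (by omega)
    · exact dist_eq_one_iff_adj.2 (adj_leg_leg.2 ⟨rfl, Or.inr (by simp only; omega)⟩)

lemma distToSet_coloring_eq (ha : ∀ i, 1 ≤ i → i ≤ n → 1 ≤ a i) (l : Fin n) (v : PalmVert n a)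
    (hv : signedDepth l v = depth v) :
    distToSet (Palm n a) v (coloring ⁻¹' {l.castSucc}) = depth v + 1 := by
  have hl : 0 < a (l + 1) := ha _ (by omega) (by omega)
  have hmem : leg l ⟨0, hl⟩ ∈ coloring ⁻¹' {l.castSucc} := by simp [coloring_leg]
  apply le_antisymm
  · obtain ⟨w, hw⟩ := exists_walk_hub v
    have h := dist_le (w.concat (adj_hub_leg (i := l) (j := ⟨0, hl⟩).2 rfl))
    rw [Walk.length_concat, hw] at h
    exact (distToSet_le_dist hmem).trans h
  · obtain ⟨s, hs, h⟩ := exists_dist_eq_distToSet (Palm n a) v ⟨_, hmem⟩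
    have h₁ := signedDepth_le_neg_one_of_coloring hs
    have h₂ := signedDepth_le_add_dist l v s
    omega

lemma signedDepth_leg_of_ne {l i : Fin n} (h : i ≠ l) (j : Fin (a (i + 1))) :
    signedDepth l (leg i j) = depth (leg i j) := by
  simp [signedDepth_leg, h]

lemma isLocatingColoring_coloring (hn : 2 ≤ n) (ha : ∀ i, 1 ≤ i → i ≤ n → 1 ≤ a i) :
    IsLocatingColoring (Palm n a) coloring := by
  have : Nontrivial (Fin n) := Fin.nontrivial_iff_two_le.2 hn
  refine ⟨fun _ _ => coloring_proper, fun u v h => ?_⟩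
  obtain rfl | ⟨i, j, rfl⟩ := eq_hub_or_eq_leg u <;>
    obtain rfl | ⟨i', j', rfl⟩ := eq_hub_or_eq_leg v
  · exact (h rfl).elim
  · obtain ⟨l, hl⟩ := exists_ne i'
    refine ⟨l.castSucc, ?_⟩
    rw [distToSet_coloring_eq ha l _ rfl,
      distToSet_coloring_eq ha l _ (signedDepth_leg_of_ne hl.symm j')]
    simp
  · obtain ⟨l, hl⟩ := exists_ne i
    refine ⟨l.castSucc, ?_⟩
    rw [distToSet_coloring_eq ha l _ (signedDepth_leg_of_ne hl.symm j),
      distToSet_coloring_eq ha l _ rfl]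
    simp
  · by_cases hii : i = i'
    · subst hii
      obtain ⟨l, hl⟩ := exists_ne i
      refine ⟨l.castSucc, ?_⟩
      rw [distToSet_coloring_eq ha l _ (signedDepth_leg_of_ne hl.symm j),
        distToSet_coloring_eq ha l _ (signedDepth_leg_of_ne hl.symm j')]
      intro e
      simp only [depth_leg, Nat.add_right_cancel_iff] at e
      exact h (congrArg _ (Fin.ext e))
    · refine ⟨i.castSucc, ?_⟩
      rw [distToSet_coloring_eq ha i _ (signedDepth_leg_of_ne (Ne.symm hii) j'), depth_leg]
      have := distToSet_coloring_le_one j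
      omega

end Palm

/-- For `n ≥ 2` and a palm `G = S_n(a_1, …, a_n)` (with all `a_i ≥ 1`),
`⌈log_3(n/4)⌉ + 3 ≤ χ_L(G) ≤ n + 1`. -/
theorem locatingChromaticNumber_palm_bounds (n : ℕ) (hn : 2 ≤ n) (a : ℕ → ℕ)
    (ha : ∀ i, 1 ≤ i → i ≤ n → 1 ≤ a i) :
    ⌈Real.logb 3 ((n : ℝ) / 4)⌉ + 3 ≤ (locatingChromaticNumber (Palm n a) : ℤ) ∧
      locatingChromaticNumber (Palm n a) ≤ n + 1 := by
  have hmem : n + 1 ∈ {k : ℕ | ∃ c : PalmVert n a → Fin k, IsLocatingColoring (Palm n a) c} :=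
    ⟨_, Palm.isLocatingColoring_coloring hn ha⟩
  refine ⟨?_, Nat.sInf_le hmem⟩
  obtain ⟨c, hc⟩ : ∃ c : PalmVert n a → Fin (locatingChromaticNumber (Palm n a)),
    IsLocatingColoring (Palm n a) c := Nat.sInf_mem ⟨_, hmem⟩
  have hpos (i : Fin n) : 0 < a (i + 1) := ha _ (by omega) (by omega)
  have hcard := hc.card_neighbors_le Palm.connected (x := Palm.hub)
    (f := fun i : Fin n => Palm.leg i ⟨0, hpos i⟩)
    (fun i i' h => by_contra fun hne => Palm.leg_ne_leg hne _ _ h)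
    (fun i => Palm.adj_hub_leg.2 rfl)
  generalize locatingChromaticNumber (Palm n a) = k at hcard
  rw [Fintype.card_fin] at hcard
  rw [← le_sub_iff_add_le, Int.ceil_le,
    Real.logb_le_iff_le_rpow (by norm_num) (by positivity)]
  push_cast
  rw [Real.rpow_sub (by norm_num), Real.rpow_natCast, div_le_div_iff₀ (by norm_num) (by positivity)]
  norm_num
  have : (27 * n : ℝ) ≤ 4 * 3 ^ k := by exact_mod_cast hcard
  linarith
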